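/- Let θ ∈ (0, 1), let 0 < μ ≤ 1/√n, let X₀ ∈ ℝ^{n×p} have i.i.d. BG(θ) entries, and fix any w ∈ Γ with ‖w‖ ≤ 1/4. Then for every t > 0, P[ ‖∇²g(w; X₀) − E[∇²g(w; X₀)]‖_op ≥ t ] ≤ 4n exp( −p μ² t² / (512 n² + 32 μ n t) ). -/

import Mathlib

open MeasureTheory ProbabilityTheory Real Matrix
open scoped RealInnerProductSpace ENNReal NNReal

noncomputable section

/-- The Bernoulli–Gaussian law `BG(θ)`: with probability `θ` a standard Gaussian,
with probability `1-θ` a point mass at `0`. -/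
def bg (θ : ℝ) : Measure ℝ :=
  θ.toNNReal • gaussianReal 0 1 + (1 - θ).toNNReal • Measure.dirac 0

instance bg.instIsFiniteMeasure (θ : ℝ) : IsFiniteMeasure (bg θ) := by
  unfold bg; infer_instance

/-- Law of an `n × p` matrix with i.i.d. `BG(θ)` entries. -/
def bgMatrix (θ : ℝ) (n p : ℕ) : Measure (Fin n → Fin p → ℝ) :=
  Measure.pi fun _ => Measure.pi fun _ => bg θ

/-- Law of a vector in `ℝ^n` with i.i.d. `BG(θ)` entries. -/
def bgVec (θ : ℝ) (n : ℕ) : Measure (Fin n → ℝ) :=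
  Measure.pi fun _ => bg θ

/-- The smooth sparsity surrogate `h_μ(z) = μ log cosh (z/μ)`. -/
def hmu (μ z : ℝ) : ℝ := μ * Real.log (Real.cosh (z / μ))

/-- Reparametrization `q(w) = (w, √(1-‖w‖²))` with `w` in the unit ball of `ℝ^{n-1}`. -/
def qmap (n : ℕ) (w : EuclideanSpace ℝ (Fin (n - 1))) : Fin n → ℝ :=
  fun i => if h : (i : ℕ) < n - 1 then w ⟨i, h⟩ else Real.sqrt (1 - ‖w‖ ^ 2)

/-- `f(q; Y) = (1/p) ∑ₖ h_μ(qᵀ yₖ)`. -/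
def ffun (n p : ℕ) (μ : ℝ) (Y : Matrix (Fin n) (Fin p) ℝ)
    (q : EuclideanSpace ℝ (Fin n)) : ℝ :=
  (p : ℝ)⁻¹ * ∑ k : Fin p, hmu μ (∑ i : Fin n, q i * Y i k)

/-- `g(w; Y) = f(q(w); Y)`. -/
def gfun (n p : ℕ) (μ : ℝ) (Y : Matrix (Fin n) (Fin p) ℝ)
    (w : EuclideanSpace ℝ (Fin (n - 1))) : ℝ :=
  (p : ℝ)⁻¹ * ∑ k : Fin p, hmu μ (∑ i : Fin n, qmap n w i * Y i k)

/-- Gradient `∇g(w; Y)` in `w`. -/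
def gradg (n p : ℕ) (μ : ℝ) (Y : Matrix (Fin n) (Fin p) ℝ)
    (w : EuclideanSpace ℝ (Fin (n - 1))) : EuclideanSpace ℝ (Fin (n - 1)) :=
  gradient (gfun n p μ Y) w

/-- Hessian `∇²g(w; Y)` in `w`, as a continuous linear map. -/
def hessg (n p : ℕ) (μ : ℝ) (Y : Matrix (Fin n) (Fin p) ℝ)
    (w : EuclideanSpace ℝ (Fin (n - 1))) :
    EuclideanSpace ℝ (Fin (n - 1)) →L[ℝ] EuclideanSpace ℝ (Fin (n - 1)) :=
  fderiv ℝ (gradg n p μ Y) w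

/-- The set `Γ = {w : ‖w‖ < √((4n-1)/(4n))}`. -/
def GammaSet (n : ℕ) : Set (EuclideanSpace ℝ (Fin (n - 1))) :=
  {w | ‖w‖ < Real.sqrt ((4 * (n : ℝ) - 1) / (4 * n))}

/-- Spectral (`ℓ²→ℓ²` operator) norm of а matrix. -/
def specNorm {m k : ℕ} (M : Matrix (Fin m) (Fin k) ℝ) : ℝ :=
  ‖LinearMap.toContinuousLinearMap (Matrix.toEuclideanLin M)‖

/-- Largest magnitude of an entry of a matrix. -/
def Minf {m k : ℕ} (M : Matrix (Fin m) (Fin k) ℝ) : ℝ := ⨆ i, ⨆ j, |M i j|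

/-- Condition number: ratio of largest to smallest singular value. -/
def kappa {n : ℕ} (s : Fin n → ℝ) : ℝ := (⨆ i, s i) / (⨅ i, s i)

/-- Signed standard basis vectors `{± e_i}` of `ℝ^n`. -/
def SignedBasis (n : ℕ) : Set (EuclideanSpace ℝ (Fin n)) :=
  {b | ∃ i : Fin n, b = EuclideanSpace.single i (1 : ℝ) ∨ b = -EuclideanSpace.single i (1 : ℝ)}

/-- Set of local minimizers of `f(·; Y)` over the unit sphere `S^{n-1}`. -/
def LocalMins (n p : ℕ) (μ : ℝ) (Y : Matrix (Fin n) (Fin p) ℝ) :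
    Set (EuclideanSpace ℝ (Fin n)) :=
  {q | q ∈ Metric.sphere (0 : EuclideanSpace ℝ (Fin n)) 1 ∧
       IsLocalMinOn (ffun n p μ Y) (Metric.sphere (0 : EuclideanSpace ℝ (Fin n)) 1) q}

/-- Expected objective `E_x[h_μ(q(w)ᵀ x)]` for `x` with i.i.d. `BG(θ)` entries. -/
def Gexp (n : ℕ) (θ μ : ℝ) (w : EuclideanSpace ℝ (Fin (n - 1))) : ℝ :=
  ∫ x, hmu μ (∑ i : Fin n, qmap n w i * x i) ∂(bgVec θ n)

/-!
The Hessian at `w` is the average of the terms `h_μ''(u) ζ ζᵀ + h_μ'(u) ∇²u` over the columns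
`(a, c)` of the matrix, where `u = ⟪a, w⟫ + c √(1 - ‖w‖²)` and `ζ = ∇u`. Since `h_μ'' ≤ 1 / μ`,
`|h_μ'| ≤ 1` and `μ √n ≤ 1`, the Hilbert–Schmidt norm of such a term is at most
`(2 ‖(a, c)‖² + 1 / 2) / μ`. The entries being sub-Gaussian, `‖(a, c)‖²` has an exponential moment
at scale `n`, hence the terms have one at scale `R = 16 n / μ`.

The Hilbert–Schmidt norm dominates the operator norm and is Euclidean, which makes a
dimension-free Bernstein inequality available in place of a matrix one: in a Hilbert space an
independent centred `Y` satisfies `E cosh ‖S + Y‖ ≤ E cosh ‖S‖ * E (exp ‖Y‖ - ‖Y‖)`. Multiplying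
these factors over the columns and applying Markov's inequality gives the tail bound with the
prefactor `2` instead of `4 n`.
-/

/-- The Taylor coefficients of `s ↦ cosh √s` are nonnegative. -/
lemma convexOn_cosh_sqrt : ConvexOn ℝ (Set.Ici 0) fun s : ℝ => cosh √s := by
  have hasSum_cosh_sqrt {s : ℝ} (hs : 0 ≤ s) :
      HasSum (fun k : ℕ => s ^ k / ((2 * k).factorial : ℝ)) (cosh √s) := by
    simpa only [pow_mul, sq_sqrt hs] using Real.hasSum_cosh √s
  refine ⟨convex_Ici 0, fun x hx y hy a b ha hb hab => ?_⟩
  have hxy : 0 ≤ a • x + b • y := convex_Ici 0 hx hy ha hb hab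
  refine hasSum_le (fun k => ?_) (hasSum_cosh_sqrt hxy)
    (((hasSum_cosh_sqrt hx).const_smul a).add ((hasSum_cosh_sqrt hy).const_smul b))
  calc (a • x + b • y) ^ k / ((2 * k).factorial : ℝ)
      ≤ (a • x ^ k + b • y ^ k) / ((2 * k).factorial : ℝ) := by
        gcongr
        exact (convexOn_pow k).2 hx hy ha hb hab
    _ = a • (x ^ k / ((2 * k).factorial : ℝ)) + b • (y ^ k / ((2 * k).factorial : ℝ)) := by
        simp only [smul_eq_mul]
        ring

lemma exp_mul_sub_one_sub_le {κ v : ℝ} (h0 : 0 ≤ κ) (h1 : κ ≤ 1) (hv : 0 ≤ v) :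
    exp (κ * v) - 1 - κ * v ≤ κ ^ 2 * (exp v - 1 - v) := by
  have hasSum_exp_sub (u : ℝ) :
      HasSum (fun k : ℕ => u ^ (k + 2) / ((k + 2).factorial : ℝ)) (exp u - 1 - u) := by
    have h := (hasSum_nat_add_iff' 2).2 (NormedSpace.expSeries_div_hasSum_exp u)
    simpa [Finset.sum_range_succ, sub_sub, ← Real.exp_eq_exp_ℝ] using h
  refine hasSum_le (fun k => ?_) (hasSum_exp_sub (κ * v)) ((hasSum_exp_sub v).mul_left (κ ^ 2))
  calc (κ * v) ^ (k + 2) / ((k + 2).factorial : ℝ)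
      = κ ^ k * (κ ^ 2 * (v ^ (k + 2) / ((k + 2).factorial : ℝ))) := by ring
    _ ≤ κ ^ 2 * (v ^ (k + 2) / ((k + 2).factorial : ℝ)) :=
        mul_le_of_le_one_left (by positivity) (pow_le_one₀ h0 h1)

section HilbertSpace

variable {H : Type*} [NormedAddCommGroup H] [InnerProductSpace ℝ H]

/-- For fixed norms of `a` and `b` the left side is a convex function of `⟪a, b⟫`; the right side
is its chord between `⟪a, b⟫ = ± ‖a‖ * ‖b‖`. -/
lemma cosh_norm_add_le_cosh_mul_cosh_add (a b : H) :
    cosh ‖a + b‖ ≤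
      cosh ‖a‖ * cosh ‖b‖ + ⟪(sinh ‖a‖ / ‖a‖) • a, b⟫ * (sinh ‖b‖ / ‖b‖) := by
  rcases eq_or_ne a 0 with rfl | ha
  · simp
  rcases eq_or_ne b 0 with rfl | hb
  · simp
  obtain ⟨c, hc⟩ : ∃ c, c = ⟪a, b⟫ / (‖a‖ * ‖b‖) := ⟨_, rfl⟩
  have hab : ⟪a, b⟫ = c * (‖a‖ * ‖b‖) := by rw [hc]; field_simp
  obtain ⟨hc1, hc2⟩ : -1 ≤ c ∧ c ≤ 1 :=
    abs_le.1 (hc ▸ abs_real_inner_div_norm_mul_norm_le_one a b)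
  have hnorm : ‖a + b‖ ^ 2 =
      ((1 + c) / 2) • (‖a‖ + ‖b‖) ^ 2 + ((1 - c) / 2) • (‖a‖ - ‖b‖) ^ 2 := by
    rw [norm_add_sq_real, hab]
    simp only [smul_eq_mul]
    ring
  have hconv := convexOn_cosh_sqrt.2 (sq_nonneg (‖a‖ + ‖b‖)) (sq_nonneg (‖a‖ - ‖b‖))
    (show 0 ≤ (1 + c) / 2 by linarith) (show 0 ≤ (1 - c) / 2 by linarith) (by ring)
  rw [← hnorm] at hconv
  simp only [sqrt_sq_eq_abs, cosh_abs, smul_eq_mul, cosh_add, cosh_sub] at hconv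
  calc cosh ‖a + b‖ ≤ cosh ‖a‖ * cosh ‖b‖ + c * (sinh ‖a‖ * sinh ‖b‖) := by linarith
    _ = _ := by rw [real_inner_smul_left, hab]; field_simp

lemma cosh_norm_add_le (a b : H) :
    cosh ‖a + b‖ ≤ cosh ‖a‖ * (exp ‖b‖ - ‖b‖) + ⟪(sinh ‖a‖ / ‖a‖) • a, b⟫ := by
  rcases eq_or_ne b 0 with rfl | hb
  · simp
  have hslope : 1 ≤ sinh ‖b‖ / ‖b‖ :=
    (one_le_div (norm_pos_iff.2 hb)).2 (self_le_sinh_iff.2 (norm_nonneg b))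
  have hinner : ⟪(sinh ‖a‖ / ‖a‖) • a, b⟫ ≤ cosh ‖a‖ * ‖b‖ := by
    refine (real_inner_le_norm _ _).trans ?_
    gcongr
    rw [norm_smul, norm_div, norm_norm, div_mul_cancel_of_imp (by simp +contextual),
      Real.norm_of_nonneg (sinh_nonneg_iff.2 (norm_nonneg a))]
    exact (sinh_lt_cosh _).le
  calc cosh ‖a + b‖
      ≤ cosh ‖a‖ * cosh ‖b‖ + ⟪(sinh ‖a‖ / ‖a‖) • a, b⟫ * (sinh ‖b‖ / ‖b‖) :=
        cosh_norm_add_le_cosh_mul_cosh_add a b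
    _ ≤ cosh ‖a‖ * cosh ‖b‖ + (cosh ‖a‖ * ‖b‖ * (sinh ‖b‖ / ‖b‖ - 1) +
          ⟪(sinh ‖a‖ / ‖a‖) • a, b⟫) := by
        linarith [mul_le_mul_of_nonneg_right hinner (sub_nonneg.2 hslope)]
    _ = cosh ‖a‖ * (exp ‖b‖ - ‖b‖) + ⟪(sinh ‖a‖ / ‖a‖) • a, b⟫ := by
        rw [← cosh_add_sinh]
        field_simp
        ring

end HilbertSpace

section ExponentialMoment

variable {Ω : Type*} [MeasurableSpace Ω] {P : Measure Ω}

lemma measure_le_le_lintegral_cosh {V : Ω → ℝ} (hV : AEMeasurable V P) {s : ℝ} (hs : 0 ≤ s)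
    (r : ℝ) :
    P {ω | r ≤ V ω} ≤
      ENNReal.ofReal (2 * exp (-(s * r))) * ∫⁻ ω, ENNReal.ofReal (cosh (s * V ω)) ∂P := by
  have hsub : {ω | r ≤ V ω} ⊆
      {ω | 1 ≤ ENNReal.ofReal (2 * exp (-(s * r))) * ENNReal.ofReal (cosh (s * V ω))} := by
    intro ω (hω : r ≤ V ω)
    have hcosh : exp (s * r) / 2 ≤ cosh (s * V ω) := calc
      exp (s * r) / 2 ≤ exp (s * V ω) / 2 := by gcongr
      _ ≤ cosh (s * V ω) := by rw [cosh_eq]; linarith [exp_pos (-(s * V ω))]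
    rw [Set.mem_ofPred_eq, ← ENNReal.ofReal_mul (by positivity), ENNReal.one_le_ofReal]
    calc (1 : ℝ) = 2 * exp (-(s * r)) * (exp (s * r) / 2) := by
          rw [exp_neg]; field_simp
      _ ≤ 2 * exp (-(s * r)) * cosh (s * V ω) := by gcongr
  calc P {ω | r ≤ V ω}
      ≤ ∫⁻ ω, ENNReal.ofReal (2 * exp (-(s * r))) * ENNReal.ofReal (cosh (s * V ω)) ∂P := by
        refine (measure_mono hsub).trans ?_
        simpa only [one_mul] using mul_meas_ge_le_lintegral₀ (by fun_prop) 1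
    _ = _ := lintegral_const_mul' _ _ ENNReal.ofReal_ne_top

lemma lintegral_exp_sub_le [IsProbabilityMeasure P] {V : Ω → ℝ} (hV : ∀ ω, 0 ≤ V ω)
    (hexp : ∫⁻ ω, ENNReal.ofReal (exp (V ω)) ∂P ≤ ENNReal.ofReal (3 / 2)) {κ : ℝ} (h0 : 0 ≤ κ)
    (h1 : κ ≤ 1) :
    ∫⁻ ω, ENNReal.ofReal (exp (κ * V ω) - κ * V ω) ∂P ≤ ENNReal.ofReal (exp (κ ^ 2 / 2)) := by
  have hκ : 0 ≤ 1 - κ ^ 2 := sub_nonneg.2 (pow_le_one₀ h0 h1)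
  calc ∫⁻ ω, ENNReal.ofReal (exp (κ * V ω) - κ * V ω) ∂P
      ≤ ∫⁻ ω, (ENNReal.ofReal (1 - κ ^ 2) +
          ENNReal.ofReal (κ ^ 2) * ENNReal.ofReal (exp (V ω))) ∂P := by
        refine lintegral_mono fun ω => ?_
        rw [← ENNReal.ofReal_mul (sq_nonneg κ), ← ENNReal.ofReal_add hκ (by positivity)]
        refine ENNReal.ofReal_le_ofReal ?_
        nlinarith [exp_mul_sub_one_sub_le h0 h1 (hV ω), mul_nonneg (sq_nonneg κ) (hV ω)]
    _ = ENNReal.ofReal (1 - κ ^ 2) +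
          ENNReal.ofReal (κ ^ 2) * ∫⁻ ω, ENNReal.ofReal (exp (V ω)) ∂P := by
        rw [lintegral_add_left measurable_const, lintegral_const_mul' _ _ ENNReal.ofReal_ne_top]
        simp
    _ ≤ ENNReal.ofReal (1 - κ ^ 2) + ENNReal.ofReal (κ ^ 2) * ENNReal.ofReal (3 / 2) := by
        gcongr
    _ = ENNReal.ofReal (κ ^ 2 / 2 + 1) := by
        rw [← ENNReal.ofReal_mul (sq_nonneg κ), ← ENNReal.ofReal_add hκ (by positivity)]
        ring_nf
    _ ≤ ENNReal.ofReal (exp (κ ^ 2 / 2)) := ENNReal.ofReal_le_ofReal (add_one_le_exp _)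

variable {F : Type*} [NormedAddCommGroup F]

lemma integrable_of_lintegral_exp_norm_div_ne_top {Z : Ω → F} (hZ : AEStronglyMeasurable Z P)
    {R : ℝ} (hR : 0 < R) (hexp : ∫⁻ ω, ENNReal.ofReal (exp (‖Z ω‖ / R)) ∂P ≠ ∞) :
    Integrable Z P := by
  have hint : Integrable (fun ω => exp (‖Z ω‖ / R)) P :=
    (lintegral_ofReal_ne_top_iff_integrable (by fun_prop) (.of_forall fun _ => (exp_pos _).le)).1
      hexp
  refine (hint.const_mul R).mono' hZ (.of_forall fun ω => ?_)
  rw [← div_le_iff₀' hR]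
  exact (le_add_of_nonneg_right zero_le_one).trans (add_one_le_exp _)

variable [NormedSpace ℝ F]

lemma exp_norm_integral_div_le [IsProbabilityMeasure P] {Z : Ω → F} (hZ : Integrable Z P) {R : ℝ}
    (hR : 0 < R) :
    ENNReal.ofReal (exp (‖∫ ω, Z ω ∂P‖ / R)) ≤ ∫⁻ ω, ENNReal.ofReal (exp (‖Z ω‖ / R)) ∂P := by
  by_cases htop : ∫⁻ ω, ENNReal.ofReal (exp (‖Z ω‖ / R)) ∂P = ∞
  · exact htop ▸ le_top
  have hmeas := hZ.aestronglyMeasurable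
  have hexp : Integrable (fun ω => exp (‖Z ω‖ / R)) P :=
    (lintegral_ofReal_ne_top_iff_integrable (by fun_prop) (.of_forall fun _ => (exp_pos _).le)).1
      htop
  rw [← ofReal_integral_eq_lintegral_ofReal hexp (.of_forall fun _ => (exp_pos _).le)]
  refine ENNReal.ofReal_le_ofReal ?_
  calc exp (‖∫ ω, Z ω ∂P‖ / R) ≤ exp (∫ ω, ‖Z ω‖ / R ∂P) := by
        rw [integral_div]
        gcongr
        exact norm_integral_le_integral_norm Z
    _ ≤ ∫ ω, exp (‖Z ω‖ / R) ∂P :=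
        convexOn_exp.map_integral_le continuous_exp.continuousOn isClosed_univ
          (.of_forall fun _ => Set.mem_univ _) (hZ.norm.div_const R) hexp

lemma lintegral_exp_norm_sub_integral_le [IsProbabilityMeasure P] {Z : Ω → F}
    (hZ : Integrable Z P) {R : ℝ} (hR : 0 < R) :
    ∫⁻ ω, ENNReal.ofReal (exp (‖Z ω - ∫ ω', Z ω' ∂P‖ / R)) ∂P ≤
      (∫⁻ ω, ENNReal.ofReal (exp (‖Z ω‖ / R)) ∂P) ^ 2 := by
  calc ∫⁻ ω, ENNReal.ofReal (exp (‖Z ω - ∫ ω', Z ω' ∂P‖ / R)) ∂P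
      ≤ ∫⁻ ω, ENNReal.ofReal (exp (‖Z ω‖ / R)) *
          ENNReal.ofReal (exp (‖∫ ω', Z ω' ∂P‖ / R)) ∂P := by
        refine lintegral_mono fun ω => ?_
        rw [← ENNReal.ofReal_mul (exp_pos _).le, ← exp_add, ← add_div]
        gcongr
        exact norm_sub_le _ _
    _ = (∫⁻ ω, ENNReal.ofReal (exp (‖Z ω‖ / R)) ∂P) *
          ENNReal.ofReal (exp (‖∫ ω', Z ω' ∂P‖ / R)) :=
        lintegral_mul_const' _ _ ENNReal.ofReal_ne_top
    _ ≤ _ := by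
        rw [sq]
        gcongr
        exact exp_norm_integral_div_le hZ hR

end ExponentialMoment

section Bernstein

variable {Ω : Type*} [MeasurableSpace Ω] {P : Measure Ω}
  {H : Type*} [NormedAddCommGroup H] [InnerProductSpace ℝ H] [CompleteSpace H]

lemma exp_sub_self_pos (v : ℝ) : 0 < exp v - v := by
  linarith [add_one_le_exp v]

lemma lintegral_cosh_norm_add_le {Y : Ω → H} (hY : Integrable Y P) (h0 : ∫ ω, Y ω ∂P = 0)
    (a : H) :
    ∫⁻ ω, ENNReal.ofReal (cosh ‖a + Y ω‖) ∂P ≤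
      ENNReal.ofReal (cosh ‖a‖) * ∫⁻ ω, ENNReal.ofReal (exp ‖Y ω‖ - ‖Y ω‖) ∂P := by
  by_cases htop : ∫⁻ ω, ENNReal.ofReal (exp ‖Y ω‖ - ‖Y ω‖) ∂P = ∞
  · rw [htop, ENNReal.mul_top (by simp [cosh_pos])]
    exact le_top
  have hpos (ω : Ω) : 0 ≤ exp ‖Y ω‖ - ‖Y ω‖ := (exp_sub_self_pos _).le
  have hexp : Integrable (fun ω => exp ‖Y ω‖ - ‖Y ω‖) P := by
    refine (lintegral_ofReal_ne_top_iff_integrable ?_ (.of_forall hpos)).1 htop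
    have := hY.aestronglyMeasurable.norm
    exact (continuous_exp.comp_aestronglyMeasurable this).sub this
  have hinner : ∫ ω, ⟪(sinh ‖a‖ / ‖a‖) • a, Y ω⟫ ∂P = 0 := by
    rw [integral_inner hY, h0, inner_zero_right]
  have hint := (hexp.const_mul (cosh ‖a‖)).add (hY.const_inner ((sinh ‖a‖ / ‖a‖) • a))
  calc ∫⁻ ω, ENNReal.ofReal (cosh ‖a + Y ω‖) ∂P
      ≤ ∫⁻ ω, ENNReal.ofReal
          (cosh ‖a‖ * (exp ‖Y ω‖ - ‖Y ω‖) + ⟪(sinh ‖a‖ / ‖a‖) • a, Y ω⟫) ∂P := by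
        gcongr
        exact cosh_norm_add_le a _
    _ = ENNReal.ofReal
          (∫ ω, cosh ‖a‖ * (exp ‖Y ω‖ - ‖Y ω‖) + ⟪(sinh ‖a‖ / ‖a‖) • a, Y ω⟫ ∂P) :=
        (ofReal_integral_eq_lintegral_ofReal hint
          (.of_forall fun ω => (cosh_pos _).le.trans (cosh_norm_add_le a (Y ω)))).symm
    _ = ENNReal.ofReal (cosh ‖a‖) * ∫⁻ ω, ENNReal.ofReal (exp ‖Y ω‖ - ‖Y ω‖) ∂P := by
        rw [integral_add (hexp.const_mul _) (hY.const_inner _), hinner, add_zero,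
          integral_const_mul, ENNReal.ofReal_mul (cosh_pos _).le,
          ofReal_integral_eq_lintegral_ofReal hexp (.of_forall hpos)]

variable [MeasurableSpace H] [BorelSpace H] [SecondCountableTopology H] {ι : Type*}

lemma lintegral_cosh_norm_add_le_of_indepFun {S Y : Ω → H} (hS : Measurable S) (hYm : Measurable Y)
    [IsProbabilityMeasure P] (hind : IndepFun S Y P) (hY : Integrable Y P)
    (h0 : ∫ ω, Y ω ∂P = 0) :
    ∫⁻ ω, ENNReal.ofReal (cosh ‖S ω + Y ω‖) ∂P ≤
      (∫⁻ ω, ENNReal.ofReal (cosh ‖S ω‖) ∂P) *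
        ∫⁻ ω, ENNReal.ofReal (exp ‖Y ω‖ - ‖Y ω‖) ∂P := by
  have hlaw := (indepFun_iff_map_prod_eq_prod_map_map hS.aemeasurable hYm.aemeasurable).1 hind
  calc ∫⁻ ω, ENNReal.ofReal (cosh ‖S ω + Y ω‖) ∂P
      = ∫⁻ z, ENNReal.ofReal (cosh ‖z.1 + z.2‖) ∂(P.map S).prod (P.map Y) := by
        rw [← hlaw, lintegral_map (by fun_prop) (by fun_prop)]
    _ = ∫⁻ ω, ∫⁻ ω', ENNReal.ofReal (cosh ‖S ω + Y ω'‖) ∂P ∂P := by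
        rw [lintegral_prod _ (by fun_prop), lintegral_map (by fun_prop) hS]
        refine lintegral_congr fun ω => ?_
        rw [lintegral_map (by fun_prop) hYm]
    _ ≤ ∫⁻ ω, ENNReal.ofReal (cosh ‖S ω‖) *
          (∫⁻ ω', ENNReal.ofReal (exp ‖Y ω'‖ - ‖Y ω'‖) ∂P) ∂P :=
        lintegral_mono fun ω => lintegral_cosh_norm_add_le hY h0 (S ω)
    _ = _ := lintegral_mul_const _ (by fun_prop)

lemma lintegral_cosh_norm_sum_le {Y : ι → Ω → H} (hYm : ∀ k, Measurable (Y k))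
    (hind : iIndepFun Y P) (hY : ∀ k, Integrable (Y k) P) (h0 : ∀ k, ∫ ω, Y k ω ∂P = 0)
    (s : Finset ι) :
    ∫⁻ ω, ENNReal.ofReal (cosh ‖∑ k ∈ s, Y k ω‖) ∂P ≤
      ∏ k ∈ s, ∫⁻ ω, ENNReal.ofReal (exp ‖Y k ω‖ - ‖Y k ω‖) ∂P := by
  classical
  have := hind.isProbabilityMeasure
  induction s using Finset.induction_on with
  | empty => simp
  | insert k s hk ih =>
    have hks : IndepFun (fun ω => ∑ j ∈ s, Y j ω) (Y k) P := by
      simpa only [Finset.sum_fn] using hind.indepFun_finsetSum_of_notMem hYm hk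
    simp only [Finset.sum_insert hk, Finset.prod_insert hk, add_comm (Y k _)]
    refine (lintegral_cosh_norm_add_le_of_indepFun (by fun_prop) (hYm k) hks (hY k) (h0 k)).trans ?_
    rw [mul_comm]
    gcongr

lemma bernstein_exponent_le {R t : ℝ} (hR : 0 < R) (ht : 0 < t) :
    (t / (R + t)) ^ 2 / 2 - t / (R + t) / R * t ≤ -t ^ 2 / (2 * R ^ 2 + 2 * R * t) := by
  calc (t / (R + t)) ^ 2 / 2 - t / (R + t) / R * t
      = t ^ 2 / (2 * ((R + t) * (R + t))) - t ^ 2 / (R * (R + t)) := by field_simp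
    _ ≤ t ^ 2 / (2 * (R * (R + t))) - t ^ 2 / (R * (R + t)) := by gcongr; linarith
    _ = -t ^ 2 / (2 * R ^ 2 + 2 * R * t) := by field_simp; ring

lemma lintegral_cosh_mul_norm_sum_le {Y : ι → Ω → H} (hYm : ∀ k, Measurable (Y k))
    (hind : iIndepFun Y P) (h0 : ∀ k, ∫ ω, Y k ω ∂P = 0) {R : ℝ} (hR : 0 < R)
    (hexp : ∀ k, ∫⁻ ω, ENNReal.ofReal (exp (‖Y k ω‖ / R)) ∂P ≤ ENNReal.ofReal (3 / 2))
    (s : Finset ι) {κ : ℝ} (hκ0 : 0 ≤ κ) (hκ1 : κ ≤ 1) :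
    ∫⁻ ω, ENNReal.ofReal (cosh (κ / R * ‖∑ k ∈ s, Y k ω‖)) ∂P ≤
      ENNReal.ofReal (exp (κ ^ 2 / 2)) ^ s.card := by
  have := hind.isProbabilityMeasure
  have hY (k : ι) : Integrable (Y k) P :=
    integrable_of_lintegral_exp_norm_div_ne_top (hYm k).aestronglyMeasurable hR
      ((hexp k).trans_lt ENNReal.ofReal_lt_top).ne
  have hnorm (k : ι) (ω : Ω) : ‖(κ / R) • Y k ω‖ = κ * (‖Y k ω‖ / R) := by
    rw [norm_smul, Real.norm_of_nonneg (by positivity)]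
    ring
  have hsum (ω : Ω) : κ / R * ‖∑ k ∈ s, Y k ω‖ = ‖∑ k ∈ s, (κ / R) • Y k ω‖ := by
    rw [← Finset.smul_sum, norm_smul, Real.norm_of_nonneg (by positivity)]
  simp only [hsum]
  refine (lintegral_cosh_norm_sum_le (Y := fun k ω => (κ / R) • Y k ω)
    (fun k => (hYm k).const_smul _) (hind.comp (fun _ y => (κ / R) • y) fun _ => by fun_prop)
    (fun k => (hY k).smul (κ / R)) (fun k => by simp [integral_smul, h0]) s).trans ?_
  refine Finset.prod_le_pow_card _ _ _ fun k _ => ?_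
  simp only [hnorm]
  exact lintegral_exp_sub_le (fun ω => by positivity) (hexp k) hκ0 hκ1

lemma measure_le_norm_sum_le {Y : ι → Ω → H} (hYm : ∀ k, Measurable (Y k)) (hind : iIndepFun Y P)
    (h0 : ∀ k, ∫ ω, Y k ω ∂P = 0) {R : ℝ} (hR : 0 < R)
    (hexp : ∀ k, ∫⁻ ω, ENNReal.ofReal (exp (‖Y k ω‖ / R)) ∂P ≤ ENNReal.ofReal (3 / 2))
    (s : Finset ι) {t : ℝ} (ht : 0 < t) :
    P {ω | s.card * t ≤ ‖∑ k ∈ s, Y k ω‖} ≤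
      ENNReal.ofReal (2 * exp (-(s.card * t ^ 2) / (2 * R ^ 2 + 2 * R * t))) := by
  obtain ⟨κ, hκ⟩ : ∃ κ, κ = t / (R + t) := ⟨_, rfl⟩
  have hκ0 : 0 < κ := by rw [hκ]; positivity
  have hκ1 : κ ≤ 1 := by rw [hκ, div_le_one (by positivity)]; linarith
  have hs : 0 ≤ κ / R := by positivity
  calc P {ω | s.card * t ≤ ‖∑ k ∈ s, Y k ω‖}
      ≤ ENNReal.ofReal (2 * exp (-(κ / R * (s.card * t)))) *
          ∫⁻ ω, ENNReal.ofReal (cosh (κ / R * ‖∑ k ∈ s, Y k ω‖)) ∂P :=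
        measure_le_le_lintegral_cosh (by fun_prop) hs _
    _ ≤ ENNReal.ofReal (2 * exp (-(κ / R * (s.card * t)))) *
          ENNReal.ofReal (exp (κ ^ 2 / 2)) ^ s.card := by
        gcongr
        exact lintegral_cosh_mul_norm_sum_le hYm hind h0 hR hexp s hκ0.le hκ1
    _ = ENNReal.ofReal (2 * exp (s.card * (κ ^ 2 / 2 - κ / R * t))) := by
        rw [← ENNReal.ofReal_pow (exp_pos _).le, ← ENNReal.ofReal_mul (by positivity),
          ← exp_nat_mul, mul_assoc, ← exp_add]
        ring_nf
    _ ≤ ENNReal.ofReal (2 * exp (s.card * (-t ^ 2 / (2 * R ^ 2 + 2 * R * t)))) := by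
        gcongr
        rw [hκ]
        exact bernstein_exponent_le hR ht
    _ = _ := by rw [← mul_div_assoc, mul_neg]

lemma measure_le_norm_sum_sub_integral_le {Z : ι → Ω → H} (hZm : ∀ k, Measurable (Z k))
    (hind : iIndepFun Z P) {R : ℝ} (hR : 0 < R)
    (hexp : ∀ k, (∫⁻ ω, ENNReal.ofReal (exp (‖Z k ω‖ / R)) ∂P) ^ 2 ≤ ENNReal.ofReal (3 / 2))
    (s : Finset ι) {t : ℝ} (ht : 0 < t) :
    P {ω | s.card * t ≤ ‖∑ k ∈ s, (Z k ω - ∫ ω', Z k ω' ∂P)‖} ≤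
      ENNReal.ofReal (2 * exp (-(s.card * t ^ 2) / (2 * R ^ 2 + 2 * R * t))) := by
  have := hind.isProbabilityMeasure
  have hfin (k : ι) : ∫⁻ ω, ENNReal.ofReal (exp (‖Z k ω‖ / R)) ∂P ≠ ∞ := fun h => by
    simpa [h] using hexp k
  have hint (k : ι) : Integrable (Z k) P :=
    integrable_of_lintegral_exp_norm_div_ne_top (hZm k).aestronglyMeasurable hR (hfin k)
  refine measure_le_norm_sum_le (fun k => (hZm k).sub_const _)
    (hind.comp (fun k z => z - ∫ ω', Z k ω' ∂P) fun k => by fun_prop) (fun k => ?_) hR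
    (fun k => (lintegral_exp_norm_sub_integral_le (hint k) hR).trans (hexp k)) s ht
  rw [integral_sub (hint k) (integrable_const _), integral_const, probReal_univ, one_smul, sub_self]

variable {F : Type*} [NormedAddCommGroup F] [NormedSpace ℝ F] [CompleteSpace F]

/-- A norm that is dominated by a Hilbert norm inherits the concentration inequality. -/
lemma measure_le_norm_average_sub_integral_le {Q : ι → Ω → F}
    (hQm : ∀ k, AEStronglyMeasurable (Q k) P) {L : F →L[ℝ] H} (hL : ∀ A, ‖A‖ ≤ ‖L A‖)
    (hLm : ∀ k, Measurable fun ω => L (Q k ω)) (hind : iIndepFun (fun k ω => L (Q k ω)) P)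
    {R : ℝ} (hR : 0 < R)
    (hexp : ∀ k, (∫⁻ ω, ENNReal.ofReal (exp (‖L (Q k ω)‖ / R)) ∂P) ^ 2 ≤ ENNReal.ofReal (3 / 2))
    (s : Finset ι) {t : ℝ} (ht : 0 < t) :
    P {ω | t ≤ ‖(s.card : ℝ)⁻¹ • ∑ k ∈ s, Q k ω -
        ∫ ω', (s.card : ℝ)⁻¹ • ∑ k ∈ s, Q k ω' ∂P‖} ≤
      ENNReal.ofReal (2 * exp (-(s.card * t ^ 2) / (2 * R ^ 2 + 2 * R * t))) := by
  have hfin (k : ι) : ∫⁻ ω, ENNReal.ofReal (exp (‖L (Q k ω)‖ / R)) ∂P ≠ ∞ := fun h => by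
    simpa [h] using hexp k
  have hLint (k : ι) : Integrable (fun ω => L (Q k ω)) P :=
    integrable_of_lintegral_exp_norm_div_ne_top (hLm k).aestronglyMeasurable hR (hfin k)
  have hint (k : ι) : Integrable (Q k) P :=
    (hLint k).norm.mono' (hQm k) (.of_forall fun ω => hL _)
  refine le_trans (measure_mono fun ω (hω : t ≤ _) => ?_)
    (measure_le_norm_sum_sub_integral_le hLm hind hR hexp s ht)
  rw [integral_smul, integral_finsetSum s fun k _ => hint k, ← smul_sub, ← Finset.sum_sub_distrib,
    norm_smul, norm_inv, Real.norm_natCast] at hω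
  calc (s.card : ℝ) * t ≤ s.card * ((s.card : ℝ)⁻¹ * ‖∑ k ∈ s, (Q k ω - ∫ ω', Q k ω' ∂P)‖) := by
        gcongr
    _ ≤ ‖∑ k ∈ s, (Q k ω - ∫ ω', Q k ω' ∂P)‖ := by
        rw [← mul_assoc]
        exact mul_le_of_le_one_left (norm_nonneg _) mul_inv_le_one
    _ ≤ ‖∑ k ∈ s, (L (Q k ω) - ∫ ω', L (Q k ω') ∂P)‖ := by
        refine (hL _).trans_eq ?_
        simp only [map_sum, map_sub, L.integral_comp_comm (hint _)]

end Bernstein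

lemma hasDerivAt_tanh (x : ℝ) : HasDerivAt tanh (1 / cosh x ^ 2) x := by
  have h := (Real.hasDerivAt_sinh x).fun_div (Real.hasDerivAt_cosh x) (cosh_pos x).ne'
  simp only [← tanh_eq_sinh_div_cosh, ← sq, cosh_sq_sub_sinh_sq] at h
  exact h

lemma continuous_tanh : Continuous tanh :=
  continuous_iff_continuousAt.2 fun x => (hasDerivAt_tanh x).continuousAt

lemma hasDerivAt_hmu {μ : ℝ} (hμ : μ ≠ 0) (z : ℝ) : HasDerivAt (hmu μ) (tanh (z / μ)) z := by
  have h := ((((hasDerivAt_id z).div_const μ).cosh).log (cosh_pos _).ne').const_mul μ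
  refine HasDerivAt.congr_deriv (f := hmu μ) h ?_
  rw [tanh_eq_sinh_div_cosh, id]
  field_simp

section SphereChart

variable {E : Type*} [NormedAddCommGroup E]

/-- The last coordinate of the point `(w, √(1 - ‖w‖²))` of the unit sphere of `E × ℝ`. -/
def height (w : E) : ℝ := √(1 - ‖w‖ ^ 2)

lemma one_sub_norm_sq_pos {w : E} (hw : ‖w‖ < 1) : 0 < 1 - ‖w‖ ^ 2 :=
  sub_pos.2 (pow_lt_one₀ (norm_nonneg w) hw two_ne_zero)

lemma height_pos {w : E} (hw : ‖w‖ < 1) : 0 < height w :=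
  sqrt_pos.2 (one_sub_norm_sq_pos hw)

lemma fifteen_sixteenths_le_height {w : E} (hw : ‖w‖ ≤ 1 / 4) : 15 / 16 ≤ height w := by
  refine le_sqrt_of_sq_le ?_
  nlinarith [norm_nonneg w]

variable [InnerProductSpace ℝ E]

/-- The inner product of the point `(w, √(1 - ‖w‖²))` of the unit sphere with `(a, c)`. -/
def sphereInner (a : E) (c : ℝ) (w : E) : ℝ := ⟪a, w⟫ + c * height w

/-- The gradient of `sphereInner a c`. -/
def sphereGrad (a : E) (c : ℝ) (w : E) : E := a - (c / height w) • w

/-- The Hessian of `-height`, so that `sphereInner a c` has Hessian `-c • capHess w`. -/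
def capHess (w : E) : E →L[ℝ] E :=
  (1 / height w) • ContinuousLinearMap.id ℝ E + (1 / height w ^ 3) • (innerSL ℝ w).smulRight w

/-- The Hessian at `w` of `hmu μ ∘ sphereInner a c`. -/
def sphereHess (μ : ℝ) (w a : E) (c : ℝ) : E →L[ℝ] E :=
  (1 / (μ * cosh (sphereInner a c w / μ) ^ 2)) •
      (innerSL ℝ (sphereGrad a c w)).smulRight (sphereGrad a c w) -
    (tanh (sphereInner a c w / μ) * c) • capHess w

lemma hasFDerivAt_height {w : E} (hw : ‖w‖ < 1) :
    HasFDerivAt height (-(1 / height w) • innerSL ℝ w) w := by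
  have h := (((hasStrictFDerivAt_norm_sq w).hasFDerivAt).const_sub 1).sqrt
    (one_sub_norm_sq_pos hw).ne'
  refine HasFDerivAt.congr_fderiv (f := height) h ?_
  ext v
  simp [height]
  field_simp

lemma hasFDerivAt_sphereInner (a : E) (c : ℝ) {w : E} (hw : ‖w‖ < 1) :
    HasFDerivAt (sphereInner a c) (innerSL ℝ (sphereGrad a c w)) w := by
  have h := ((innerSL ℝ a).hasFDerivAt (x := w)).add ((hasFDerivAt_height hw).const_mul c)
  refine HasFDerivAt.congr_fderiv (f := sphereInner a c) h ?_
  ext v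
  simp [sphereGrad]
  ring

lemma hasFDerivAt_sphereGrad (a : E) (c : ℝ) {w : E} (hw : ‖w‖ < 1) :
    HasFDerivAt (sphereGrad a c) (-(c • capHess w)) w := by
  have hdiv : HasFDerivAt (fun v : E => c / height v) _ w :=
    ((hasDerivAt_inv (height_pos hw).ne').comp_hasFDerivAt w (hasFDerivAt_height hw)).const_mul c
  have h := (hdiv.smul (hasFDerivAt_id w)).const_sub a
  refine HasFDerivAt.congr_fderiv (f := sphereGrad a c) h ?_
  ext v
  simp [capHess]
  module

lemma hasGradientAt_hmu_sphereInner [CompleteSpace E] {μ : ℝ} (hμ : μ ≠ 0) (a : E) (c : ℝ) {w : E}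
    (hw : ‖w‖ < 1) :
    HasGradientAt (fun v => hmu μ (sphereInner a c v))
      (tanh (sphereInner a c w / μ) • sphereGrad a c w) w := by
  rw [hasGradientAt_iff_hasFDerivAt]
  refine ((hasDerivAt_hmu hμ (sphereInner a c w)).comp_hasFDerivAt w
    (hasFDerivAt_sphereInner a c hw)).congr_fderiv ?_
  ext v
  simp

lemma hasFDerivAt_tanh_smul_sphereGrad (μ : ℝ) (a : E) (c : ℝ) {w : E} (hw : ‖w‖ < 1) :
    HasFDerivAt (fun v => tanh (sphereInner a c v / μ) • sphereGrad a c v)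
      (sphereHess μ w a c) w := by
  have hdiv : HasFDerivAt (fun v => sphereInner a c v / μ)
      (μ⁻¹ • innerSL ℝ (sphereGrad a c w)) w := by
    simpa only [div_eq_mul_inv] using (hasFDerivAt_sphereInner a c hw).mul_const μ⁻¹
  have htanh := (hasDerivAt_tanh (sphereInner a c w / μ)).comp_hasFDerivAt w hdiv
  refine (htanh.smul (hasFDerivAt_sphereGrad a c hw)).congr_fderiv ?_
  ext v
  simp [sphereHess]
  module

lemma fderiv_gradient_average_hmu_sphereInner [CompleteSpace E] {μ : ℝ} (hμ : μ ≠ 0) {p : ℕ}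
    (a : Fin p → E) (c : Fin p → ℝ) {w : E} (hw : ‖w‖ < 1) :
    fderiv ℝ (gradient fun v => (p : ℝ)⁻¹ * ∑ k, hmu μ (sphereInner (a k) (c k) v)) w =
      (p : ℝ)⁻¹ • ∑ k, sphereHess μ w (a k) (c k) := by
  have hgrad : gradient (fun v => (p : ℝ)⁻¹ * ∑ k, hmu μ (sphereInner (a k) (c k) v)) =ᶠ[nhds w]
      fun v => (p : ℝ)⁻¹ •
        ∑ k, tanh (sphereInner (a k) (c k) v / μ) • sphereGrad (a k) (c k) v := by
    filter_upwards [(isOpen_lt continuous_norm continuous_const).mem_nhds hw] with v hv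
    refine HasGradientAt.gradient ?_
    rw [hasGradientAt_iff_hasFDerivAt, map_smul, map_sum]
    exact (HasFDerivAt.fun_sum fun k _ =>
      (hasGradientAt_hmu_sphereInner hμ (a k) (c k) hv).hasFDerivAt).const_mul (p : ℝ)⁻¹
  rw [hgrad.fderiv_eq]
  exact ((HasFDerivAt.fun_sum fun k _ =>
    hasFDerivAt_tanh_smul_sphereGrad μ (a k) (c k) hw).const_smul (p : ℝ)⁻¹).fderiv

lemma continuous_sphereHess (μ : ℝ) (w : E) :
    Continuous fun y : E × ℝ => sphereHess μ w y.1 y.2 := by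
  have hgrad : Continuous fun y : E × ℝ => sphereGrad y.1 y.2 w := by
    unfold sphereGrad; fun_prop
  have hinner : Continuous fun y : E × ℝ => sphereInner y.1 y.2 w / μ := by
    unfold sphereInner; fun_prop
  have hcosh : Continuous fun y : E × ℝ => 1 / (μ * cosh (sphereInner y.1 y.2 w / μ) ^ 2) := by
    simp only [one_div, mul_inv]
    exact continuous_const.mul
      (Continuous.inv₀ (by fun_prop) fun y => (pow_pos (cosh_pos _) 2).ne')
  have hsmulRight : Continuous fun y : E × ℝ =>
      (innerSL ℝ (sphereGrad y.1 y.2 w)).smulRight (sphereGrad y.1 y.2 w) :=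
    ((ContinuousLinearMap.smulRightL ℝ E E).continuous.comp
      ((innerSL ℝ).continuous.comp hgrad)).clm_apply hgrad
  exact (hcosh.fun_smul hsmulRight).sub
    (((continuous_tanh.comp hinner).mul continuous_snd).fun_smul continuous_const)

end SphereChart

section HilbertSchmidt

variable {ι E F : Type*} [Fintype ι] [NormedAddCommGroup E] [InnerProductSpace ℝ E]
  [NormedAddCommGroup F] [NormedSpace ℝ F]

/-- The family `(A (b i))ᵢ` of images of an orthonormal basis, whose `ℓ²` norm is the
Hilbert–Schmidt norm of `A`. -/
def hilbertSchmidt (b : OrthonormalBasis ι ℝ E) : (E →L[ℝ] F) →L[ℝ] PiLp 2 fun _ : ι => F :=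
  (PiLp.continuousLinearEquiv 2 ℝ fun _ : ι => F).symm.toContinuousLinearMap.comp
    (ContinuousLinearMap.pi fun i => ContinuousLinearMap.apply ℝ F (b i))

lemma norm_hilbertSchmidt_sq (b : OrthonormalBasis ι ℝ E) (A : E →L[ℝ] F) :
    ‖hilbertSchmidt b A‖ ^ 2 = ∑ i, ‖A (b i)‖ ^ 2 :=
  PiLp.norm_sq_eq_of_L2 _ _

lemma norm_le_norm_hilbertSchmidt (b : OrthonormalBasis ι ℝ E) (A : E →L[ℝ] F) :
    ‖A‖ ≤ ‖hilbertSchmidt b A‖ := by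
  refine A.opNorm_le_bound (norm_nonneg _) fun v => abs_le_of_sq_le_sq' ?_ (by positivity) |>.2
  calc ‖A v‖ ^ 2 = ‖∑ i, b.repr v i • A (b i)‖ ^ 2 := by
        conv_lhs => rw [← b.sum_repr v]
        simp only [map_sum, map_smul]
    _ ≤ (∑ i, ‖b.repr v i‖ * ‖A (b i)‖) ^ 2 := by
        gcongr
        exact norm_sum_le_of_le _ fun i _ => (norm_smul _ _).le
    _ ≤ (∑ i, ‖b.repr v i‖ ^ 2) * ∑ i, ‖A (b i)‖ ^ 2 := Finset.sum_mul_sq_le_sq_mul_sq _ _ _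
    _ = (‖hilbertSchmidt b A‖ * ‖v‖) ^ 2 := by
        rw [← EuclideanSpace.norm_sq_eq, b.repr.norm_map, ← norm_hilbertSchmidt_sq, mul_pow,
          mul_comm]

lemma norm_hilbertSchmidt_innerSL_smulRight (b : OrthonormalBasis ι ℝ E) (v : E) (u : F) :
    ‖hilbertSchmidt b ((innerSL ℝ v).smulRight u)‖ = ‖v‖ * ‖u‖ := by
  refine (sq_eq_sq₀ (norm_nonneg _) (by positivity)).1 ?_
  rw [norm_hilbertSchmidt_sq, mul_pow, ← b.sum_sq_norm_inner_left v, Finset.sum_mul]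
  simp [norm_smul, mul_pow]

lemma norm_hilbertSchmidt_id (b : OrthonormalBasis ι ℝ E) :
    ‖hilbertSchmidt b (ContinuousLinearMap.id ℝ E)‖ = √(Fintype.card ι) := by
  rw [← sqrt_sq (norm_nonneg (hilbertSchmidt b _)), norm_hilbertSchmidt_sq]
  simp

lemma norm_hilbertSchmidt_capHess_le (b : OrthonormalBasis ι ℝ E) (w : E) :
    ‖hilbertSchmidt b (capHess w)‖ ≤ √(Fintype.card ι) / height w + ‖w‖ ^ 2 / height w ^ 3 := by
  have hheight : 0 ≤ height w := sqrt_nonneg _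
  rw [capHess, map_add, map_smul, map_smul]
  refine (norm_add_le _ _).trans_eq ?_
  rw [norm_smul, norm_smul, norm_hilbertSchmidt_id, norm_hilbertSchmidt_innerSL_smulRight,
    Real.norm_of_nonneg (by positivity), Real.norm_of_nonneg (by positivity)]
  ring

lemma norm_hilbertSchmidt_sphereHess_le (b : OrthonormalBasis ι ℝ E) {μ : ℝ} (hμ : 0 < μ)
    (w a : E) (c : ℝ) :
    ‖hilbertSchmidt b (sphereHess μ w a c)‖ ≤
      ‖sphereGrad a c w‖ ^ 2 / μ + |c| * ‖hilbertSchmidt b (capHess w)‖ := by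
  have hcosh : 1 / (μ * cosh (sphereInner a c w / μ) ^ 2) ≤ 1 / μ := by
    gcongr
    exact le_mul_of_one_le_right hμ.le (one_le_pow₀ (one_le_cosh _))
  rw [sphereHess, map_sub, map_smul, map_smul]
  refine (norm_sub_le _ _).trans (add_le_add ?_ ?_)
  · rw [norm_smul, norm_hilbertSchmidt_innerSL_smulRight, Real.norm_of_nonneg (by positivity),
      ← sq]
    exact (mul_le_mul_of_nonneg_right hcosh (sq_nonneg _)).trans_eq (one_div_mul_eq_div _ _)
  · rw [norm_smul, norm_mul, Real.norm_eq_abs, Real.norm_eq_abs]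
    gcongr
    exact mul_le_of_le_one_left (abs_nonneg c) (abs_tanh_lt_one _).le

lemma norm_sphereGrad_sq_le (a : E) (c : ℝ) {w : E} (hw : ‖w‖ ≤ 1 / 4) :
    ‖sphereGrad a c w‖ ^ 2 ≤ 11 / 10 * (‖a‖ ^ 2 + c ^ 2) := by
  have hheight := fifteen_sixteenths_le_height hw
  have hnorm : ‖sphereGrad a c w‖ ≤ ‖a‖ + 4 / 15 * |c| :=
    calc ‖sphereGrad a c w‖ ≤ ‖a‖ + |c| / height w * ‖w‖ := by
          refine (norm_sub_le _ _).trans_eq ?_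
          rw [norm_smul, norm_div, Real.norm_eq_abs, Real.norm_of_nonneg (by linarith)]
      _ ≤ ‖a‖ + |c| / (15 / 16) * (1 / 4) := by gcongr
      _ = ‖a‖ + 4 / 15 * |c| := by ring
  refine (pow_le_pow_left₀ (norm_nonneg _) hnorm 2).trans ?_
  nlinarith [sq_abs c, sq_nonneg (4 / 15 * ‖a‖ - |c|)]

lemma norm_hilbertSchmidt_sphereHess_le_div (b : OrthonormalBasis ι ℝ E) {μ : ℝ} (hμ : 0 < μ)
    (hμ1 : μ ≤ 1) (hμι : μ * √(Fintype.card ι) ≤ 1) {w : E} (hw : ‖w‖ ≤ 1 / 4) (a : E) (c : ℝ) :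
    ‖hilbertSchmidt b (sphereHess μ w a c)‖ ≤ (2 * (‖a‖ ^ 2 + c ^ 2) + 1 / 2) / μ := by
  have hheight := fifteen_sixteenths_le_height hw
  have hcap : ‖hilbertSchmidt b (capHess w)‖ ≤ 6 / 5 / μ :=
    calc ‖hilbertSchmidt b (capHess w)‖
        ≤ √(Fintype.card ι) / height w + ‖w‖ ^ 2 / height w ^ 3 :=
          norm_hilbertSchmidt_capHess_le b w
      _ ≤ √(Fintype.card ι) / (15 / 16) + (1 / 4) ^ 2 / (15 / 16) ^ 3 := by gcongr
      _ ≤ 6 / 5 / μ := by rw [le_div_iff₀ hμ]; linarith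
  calc ‖hilbertSchmidt b (sphereHess μ w a c)‖
      ≤ ‖sphereGrad a c w‖ ^ 2 / μ + |c| * ‖hilbertSchmidt b (capHess w)‖ :=
        norm_hilbertSchmidt_sphereHess_le b hμ w a c
    _ ≤ 11 / 10 * (‖a‖ ^ 2 + c ^ 2) / μ + |c| * (6 / 5 / μ) := by
        gcongr
        exact norm_sphereGrad_sq_le a c hw
    _ = (11 / 10 * (‖a‖ ^ 2 + c ^ 2) + 6 / 5 * |c|) / μ := by ring
    _ ≤ (2 * (‖a‖ ^ 2 + c ^ 2) + 1 / 2) / μ := by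
        refine div_le_div_of_nonneg_right ?_ hμ.le
        nlinarith [sq_abs c, sq_nonneg (3 * |c| - 2), sq_nonneg ‖a‖]

end HilbertSchmidt

section SquareExponential

lemma gaussianPDFReal_mul_exp_mul_sq (s x : ℝ) :
    gaussianPDFReal 0 1 x * exp (s * x ^ 2) = (√(2 * π))⁻¹ * exp (-(1 / 2 - s) * x ^ 2) := by
  rw [gaussianPDFReal, mul_assoc, ← exp_add]
  simp only [NNReal.coe_one, mul_one, sub_zero]
  ring_nf

lemma integral_exp_mul_sq_gaussianReal {s : ℝ} (hs : 2 * s < 1) :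
    ∫ x, exp (s * x ^ 2) ∂gaussianReal 0 1 = √(1 / (1 - 2 * s)) := by
  rw [integral_gaussianReal_eq_integral_smul one_ne_zero]
  simp only [smul_eq_mul, gaussianPDFReal_mul_exp_mul_sq]
  rw [integral_const_mul, integral_gaussian, ← sqrt_inv, ← sqrt_mul (by positivity)]
  have hs' : 1 - 2 * s ≠ 0 := by linarith
  congr 1
  field_simp

lemma lintegral_exp_mul_sq_gaussianReal {s : ℝ} (hs : 2 * s < 1) :
    ∫⁻ x, ENNReal.ofReal (exp (s * x ^ 2)) ∂gaussianReal 0 1 =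
      ENNReal.ofReal √(1 / (1 - 2 * s)) := by
  have hint := integral_exp_mul_sq_gaussianReal hs
  have hpos : 0 < √(1 / (1 - 2 * s)) := sqrt_pos.2 (one_div_pos.2 (by linarith))
  rw [← hint, ofReal_integral_eq_lintegral_ofReal _ (.of_forall fun x => (exp_pos _).le)]
  exact not_imp_comm.1 integral_undef (hint ▸ hpos.ne')

variable {Ω ι : Type*} [MeasurableSpace Ω] {P : Measure Ω} {c : ℝ≥0} {s : ℝ}

/-- Writing `exp (s x²)` as the Gaussian average of `exp (√(2s) x g)` and exchanging the two
integrations reduces the claim to the case of a Gaussian variable. -/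
lemma lintegral_exp_mul_sq_le_of_hasSubgaussianMGF [SFinite P] {X : Ω → ℝ}
    (hX : HasSubgaussianMGF X c P) (hs : 0 ≤ s) (hcs : 2 * (c * s) < 1) :
    ∫⁻ ω, ENNReal.ofReal (exp (s * X ω ^ 2)) ∂P ≤ ENNReal.ofReal √(1 / (1 - 2 * (c * s))) := by
  have hgauss (x : ℝ) : ENNReal.ofReal (exp (s * x ^ 2)) =
      ∫⁻ g, ENNReal.ofReal (exp (√(2 * s) * x * g)) ∂gaussianReal 0 1 := by
    rw [← ofReal_integral_eq_lintegral_ofReal (integrable_exp_mul_gaussianReal _)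
      (.of_forall fun g => (exp_pos _).le)]
    change _ = ENNReal.ofReal (mgf id (gaussianReal 0 1) (√(2 * s) * x))
    simp only [mgf_id_gaussianReal, mul_pow, sq_sqrt (show 0 ≤ 2 * s by positivity),
      NNReal.coe_one]
    ring_nf
  have hmgf (g : ℝ) : ∫⁻ ω, ENNReal.ofReal (exp (√(2 * s) * X ω * g)) ∂P ≤
      ENNReal.ofReal (exp (c * s * g ^ 2)) := by
    simp only [mul_right_comm _ (X _) g]
    rw [← ofReal_integral_eq_lintegral_ofReal (hX.integrable_exp_mul _)
      (.of_forall fun ω => (exp_pos _).le)]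
    refine ENNReal.ofReal_le_ofReal ((hX.mgf_le _).trans_eq ?_)
    rw [mul_pow, sq_sqrt (by positivity)]
    ring_nf
  have hXm := hX.aemeasurable
  calc ∫⁻ ω, ENNReal.ofReal (exp (s * X ω ^ 2)) ∂P
      = ∫⁻ g, ∫⁻ ω, ENNReal.ofReal (exp (√(2 * s) * X ω * g)) ∂P ∂gaussianReal 0 1 := by
        simp only [hgauss]
        refine lintegral_lintegral_swap ?_
        fun_prop
    _ ≤ ∫⁻ g, ENNReal.ofReal (exp (c * s * g ^ 2)) ∂gaussianReal 0 1 := lintegral_mono hmgf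
    _ = ENNReal.ofReal √(1 / (1 - 2 * (c * s))) := lintegral_exp_mul_sq_gaussianReal hcs

variable [Fintype ι] {X : ι → Ω → ℝ}

lemma lintegral_exp_mul_sum_sq_le_of_hasSubgaussianMGF (hXm : ∀ i, Measurable (X i))
    (hX : ∀ i, HasSubgaussianMGF (X i) c P) (hind : iIndepFun X P) (hs : 0 ≤ s)
    (hcs : 2 * (c * s) < 1) :
    ∫⁻ ω, ENNReal.ofReal (exp (s * ∑ i, X i ω ^ 2)) ∂P ≤
      ENNReal.ofReal (√(1 / (1 - 2 * (c * s))) ^ Fintype.card ι) := by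
  have := hind.isProbabilityMeasure
  have hm : Measurable fun x : ℝ => ENNReal.ofReal (exp (s * x ^ 2)) := by fun_prop
  calc ∫⁻ ω, ENNReal.ofReal (exp (s * ∑ i, X i ω ^ 2)) ∂P
      = ∫⁻ ω, ∏ i, ENNReal.ofReal (exp (s * X i ω ^ 2)) ∂P := by
        simp only [Finset.mul_sum, exp_sum, ENNReal.ofReal_prod_of_nonneg fun _ _ => (exp_pos _).le]
    _ = ∏ i, ∫⁻ ω, ENNReal.ofReal (exp (s * X i ω ^ 2)) ∂P :=
        lintegral_prod_eq_prod_lintegral_of_indepFun Finset.univ _ (hind.comp _ fun _ => hm)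
          fun i => hm.comp (hXm i)
    _ ≤ ∏ _i : ι, ENNReal.ofReal √(1 / (1 - 2 * (c * s))) :=
        Finset.prod_le_prod' fun i _ => lintegral_exp_mul_sq_le_of_hasSubgaussianMGF (hX i) hs hcs
    _ = ENNReal.ofReal (√(1 / (1 - 2 * (c * s))) ^ Fintype.card ι) := by
        rw [Finset.prod_const, Finset.card_univ, ENNReal.ofReal_pow (sqrt_nonneg _)]

lemma lintegral_exp_sum_sq_div_sq_le (hXm : ∀ i, Measurable (X i))
    (hX : ∀ i, HasSubgaussianMGF (X i) 1 P) (hind : iIndepFun X P) :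
    (∫⁻ ω, ENNReal.ofReal (exp ((∑ i, X i ω ^ 2) / (8 * Fintype.card ι))) ∂P) ^ 2 ≤
      ENNReal.ofReal (4 / 3) := by
  have := hind.isProbabilityMeasure
  obtain hι | hι := Nat.eq_zero_or_pos (Fintype.card ι)
  · simp only [hι, CharP.cast_eq_zero, mul_zero, div_zero, exp_zero, ENNReal.ofReal_one,
      lintegral_one, measure_univ, one_pow]
    norm_num
  set n := Fintype.card ι
  have hn : (1 : ℝ) ≤ n := Nat.one_le_cast.2 hι
  have hs : 1 / (8 * (n : ℝ)) ≤ 1 / 8 := by gcongr; linarith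
  have hbernoulli : 3 / 4 ≤ (1 - 2 * (1 / (8 * n)) : ℝ) ^ n :=
    calc (3 / 4 : ℝ) = 1 + n * -(2 * (1 / (8 * n))) := by field_simp; norm_num
      _ ≤ (1 + -(2 * (1 / (8 * n)))) ^ n := one_add_mul_le_pow (by linarith) n
      _ = (1 - 2 * (1 / (8 * n))) ^ n := by rw [← sub_eq_add_neg]
  have hmoment := lintegral_exp_mul_sum_sq_le_of_hasSubgaussianMGF hXm hX hind
    (s := 1 / (8 * n)) (by positivity) (by rw [NNReal.coe_one]; linarith)
  simp only [NNReal.coe_one, one_mul, one_div_mul_eq_div] at hmoment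
  refine (pow_le_pow_left' hmoment 2).trans ?_
  rw [← ENNReal.ofReal_pow (by positivity), pow_right_comm,
    sq_sqrt (one_div_nonneg.2 (by linarith)), _root_.one_div_pow]
  exact ENNReal.ofReal_le_ofReal
    ((one_div_le_one_div_of_le (by norm_num) hbernoulli).trans (by norm_num))

end SquareExponential

lemma iIndepFun_curry {Ω ι κ α : Type*} [MeasurableSpace Ω] [MeasurableSpace α] {P : Measure Ω}
    {X : ι → κ → Ω → α} (hXm : ∀ i j, Measurable (X i j))
    (hind : iIndepFun (fun ij : ι × κ => X ij.1 ij.2) P) :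
    iIndepFun (fun i ω j => X i j ω) P := by
  have := hind.isProbabilityMeasure
  have hprob (i : ι) (j : κ) := Measure.isProbabilityMeasure_map (hXm i j).aemeasurable (μ := P)
  have hrow (i : ι) : P.map (fun ω j => X i j ω) = Measure.infinitePi fun j => P.map (X i j) :=
    (hind.precomp (Prod.mk_right_injective i)).map_fun_eq_infinitePi_map (hXm i)
  have hsigma := (hind.precomp (Equiv.sigmaEquivProd ι κ).injective).map_fun_eq_infinitePi_map
    fun _ => hXm _ _
  rw [iIndepFun_iff_map_fun_eq_infinitePi_map (by fun_prop)]
  simp only [hrow]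
  rw [← Measure.infinitePi_map_piCurry fun i j => P.map (X i j)]
  refine Eq.trans ?_ (congrArg (Measure.map (MeasurableEquiv.piCurry fun _ _ => α)) hsigma)
  rw [Measure.map_map (MeasurableEquiv.measurable _) (measurable_pi_lambda _ fun ij => hXm _ _)]
  rfl

section BernoulliGaussian

lemma isProbabilityMeasure_bg {θ : ℝ} (hθ : θ ∈ Set.Icc (0 : ℝ) 1) :
    IsProbabilityMeasure (bg θ) := by
  constructor
  simp only [bg, Measure.add_apply, Measure.smul_apply, measure_univ, ENNReal.smul_def,
    smul_eq_mul, mul_one]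
  rw [← ENNReal.coe_add, ← Real.toNNReal_add hθ.1 (sub_nonneg.2 hθ.2), add_sub_cancel,
    Real.toNNReal_one, ENNReal.coe_one]

lemma hasSubgaussianMGF_id_bg {θ : ℝ} (hθ : θ ∈ Set.Icc (0 : ℝ) 1) :
    HasSubgaussianMGF id 1 (bg θ) := by
  have hgauss (s : ℝ) : Integrable (fun x => exp (s * id x)) (θ.toNNReal • gaussianReal 0 1) :=
    (integrable_exp_mul_gaussianReal s).smul_measure_nnreal
  have hdirac (s : ℝ) :
      Integrable (fun x => exp (s * id x)) ((1 - θ).toNNReal • Measure.dirac (0 : ℝ)) :=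
    (integrable_dirac (by finiteness)).smul_measure_nnreal
  refine ⟨fun s => (hgauss s).add_measure (hdirac s), fun s => ?_⟩
  have hmgf : ∫ x, exp (s * id x) ∂gaussianReal 0 1 = exp (s ^ 2 / 2) :=
    (congrFun mgf_id_gaussianReal s).trans (by simp)
  rw [mgf, bg, integral_add_measure (hgauss s) (hdirac s), integral_smul_nnreal_measure,
    integral_smul_nnreal_measure, hmgf, integral_dirac]
  simp only [NNReal.smul_def, Real.coe_toNNReal _ hθ.1, Real.coe_toNNReal _ (sub_nonneg.2 hθ.2),
    smul_eq_mul, id, mul_zero, exp_zero, NNReal.coe_one, one_mul]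
  nlinarith [hθ.2, one_le_exp (show 0 ≤ s ^ 2 / 2 by positivity)]

lemma hasSubgaussianMGF_bgMatrix {θ : ℝ} (hθ : θ ∈ Set.Icc (0 : ℝ) 1) {n p : ℕ} (i : Fin n)
    (k : Fin p) : HasSubgaussianMGF (fun X => X i k) 1 (bgMatrix θ n p) := by
  have := isProbabilityMeasure_bg hθ
  have hentry : MeasurePreserving (fun X : Fin n → Fin p → ℝ => X i k) (bgMatrix θ n p) (bg θ) :=
    (measurePreserving_eval (fun _ : Fin p => bg θ) k).comp
      (measurePreserving_eval (fun _ : Fin n => Measure.pi fun _ : Fin p => bg θ) i)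
  rw [← HasSubgaussianMGF.id_map_iff hentry.aemeasurable, hentry.map_eq]
  exact hasSubgaussianMGF_id_bg hθ

lemma iIndepFun_bgMatrix {θ : ℝ} (hθ : θ ∈ Set.Icc (0 : ℝ) 1) (n p : ℕ) :
    iIndepFun (fun (ik : Fin n × Fin p) X => X ik.1 ik.2) (bgMatrix θ n p) := by
  have := isProbabilityMeasure_bg hθ
  have h := iIndepFun_uncurry_infinitePi' (fun (_ : Fin n) (_ : Fin p) => bg θ)
    fun _ _ => measurable_id
  simp only [Measure.infinitePi_eq_pi] at h
  exact h

end BernoulliGaussian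

section Hessian

variable {m : ℕ}

/-- The vector of the first `m` coordinates of `x`, with the Euclidean norm. -/
def initVec (x : Fin (m + 1) → ℝ) : EuclideanSpace ℝ (Fin m) :=
  WithLp.toLp 2 fun i => x i.castSucc

lemma norm_initVec_sq_add (x : Fin (m + 1) → ℝ) :
    ‖initVec x‖ ^ 2 + x (Fin.last m) ^ 2 = ∑ i, x i ^ 2 := by
  rw [Fin.sum_univ_castSucc, EuclideanSpace.real_norm_sq_eq]
  rfl

lemma sum_qmap_mul (w : EuclideanSpace ℝ (Fin m)) (x : Fin (m + 1) → ℝ) :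
    ∑ i, qmap (m + 1) w i * x i = sphereInner (initVec x) (x (Fin.last m)) w := by
  have hinit (i : Fin m) : qmap (m + 1) w i.castSucc = w i := dif_pos i.isLt
  have hlast : qmap (m + 1) w (Fin.last m) = height w := dif_neg (lt_irrefl m)
  rw [Fin.sum_univ_castSucc, sphereInner, PiLp.inner_apply, hlast, mul_comm (height w)]
  simp only [hinit]
  rfl

lemma hessg_eq {p : ℕ} {μ : ℝ} (hμ : μ ≠ 0) (Y : Matrix (Fin (m + 1)) (Fin p) ℝ)
    {w : EuclideanSpace ℝ (Fin m)} (hw : ‖w‖ < 1) :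
    hessg (m + 1) p μ Y w =
      (p : ℝ)⁻¹ • ∑ k, sphereHess μ w (initVec fun i => Y i k) (Y (Fin.last m) k) := by
  have hg : gfun (m + 1) p μ Y = fun v : EuclideanSpace ℝ (Fin m) =>
      (p : ℝ)⁻¹ * ∑ k, hmu μ (sphereInner (initVec fun i => Y i k) (Y (Fin.last m) k) v) := by
    funext v
    simp only [← sum_qmap_mul]
    rfl
  rw [← fderiv_gradient_average_hmu_sphereInner hμ _ _ hw, ← hg]
  rfl

lemma continuous_sphereHess_initVec (μ : ℝ) (w : EuclideanSpace ℝ (Fin m)) :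
    Continuous fun x : Fin (m + 1) → ℝ => sphereHess μ w (initVec x) (x (Fin.last m)) :=
  (continuous_sphereHess μ w).comp (f := fun x : Fin (m + 1) → ℝ => (initVec x, x (Fin.last m)))
    (by unfold initVec; fun_prop)

variable {μ : ℝ} {w : EuclideanSpace ℝ (Fin m)}

lemma exp_norm_hilbertSchmidt_sphereHess_div_le (hμ : 0 < μ) (hμ1 : μ ≤ 1) (hμm : μ * √m ≤ 1)
    (hw : ‖w‖ ≤ 1 / 4) (x : Fin (m + 1) → ℝ) :
    exp (‖hilbertSchmidt (EuclideanSpace.basisFun (Fin m) ℝ)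
        (sphereHess μ w (initVec x) (x (Fin.last m)))‖ / (16 * (m + 1 : ℕ) / μ)) ≤
      exp (1 / 32) * exp ((∑ i, x i ^ 2) / (8 * (m + 1 : ℕ))) := by
  have hnorm := norm_hilbertSchmidt_sphereHess_le_div (EuclideanSpace.basisFun (Fin m) ℝ) hμ hμ1
    (by rwa [Fintype.card_fin]) hw (initVec x) (x (Fin.last m))
  rw [norm_initVec_sq_add] at hnorm
  rw [← exp_add, exp_le_exp, div_le_iff₀ (by positivity)]
  refine hnorm.trans ?_
  have hm : (1 : ℝ) ≤ (m + 1 : ℕ) := by norm_num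
  have hsplit : (1 / 32 + (∑ i, x i ^ 2) / (8 * (m + 1 : ℕ))) * (16 * (m + 1 : ℕ) / μ) =
      (2 * ∑ i, x i ^ 2 + (m + 1 : ℕ) / 2) / μ := by
    field_simp
    ring
  rw [hsplit]
  gcongr

variable {Ω : Type*} [MeasurableSpace Ω] {P : Measure Ω}

lemma lintegral_exp_norm_hilbertSchmidt_sphereHess_sq_le (hμ : 0 < μ) (hμ1 : μ ≤ 1)
    (hμm : μ * √m ≤ 1) (hw : ‖w‖ ≤ 1 / 4) {x : Fin (m + 1) → Ω → ℝ} (hxm : ∀ i, Measurable (x i))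
    (hx : ∀ i, HasSubgaussianMGF (x i) 1 P) (hind : iIndepFun x P) :
    (∫⁻ ω, ENNReal.ofReal (exp (‖hilbertSchmidt (EuclideanSpace.basisFun (Fin m) ℝ)
        (sphereHess μ w (initVec fun i => x i ω) (x (Fin.last m) ω))‖ /
          (16 * (m + 1 : ℕ) / μ))) ∂P) ^ 2 ≤ ENNReal.ofReal (3 / 2) := by
  have hmoment := lintegral_exp_sum_sq_div_sq_le hxm hx hind
  rw [Fintype.card_fin] at hmoment
  have hconst : exp (1 / 32) ^ 2 ≤ 16 / 15 := by
    rw [← exp_nat_mul, ← inv_le_inv₀ (by norm_num) (exp_pos _), ← exp_neg]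
    exact le_trans (by norm_num) (one_sub_le_exp_neg _)
  calc _ ≤ (∫⁻ ω, ENNReal.ofReal (exp (1 / 32)) *
          ENNReal.ofReal (exp ((∑ i, x i ω ^ 2) / (8 * (m + 1 : ℕ)))) ∂P) ^ 2 := by
        gcongr with ω
        rw [← ENNReal.ofReal_mul (exp_pos _).le]
        exact ENNReal.ofReal_le_ofReal
          (exp_norm_hilbertSchmidt_sphereHess_div_le hμ hμ1 hμm hw fun i => x i ω)
    _ = ENNReal.ofReal (exp (1 / 32)) ^ 2 *
          (∫⁻ ω, ENNReal.ofReal (exp ((∑ i, x i ω ^ 2) / (8 * (m + 1 : ℕ)))) ∂P) ^ 2 := by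
        rw [lintegral_const_mul' _ _ ENNReal.ofReal_ne_top, mul_pow]
    _ ≤ ENNReal.ofReal (16 / 15) * ENNReal.ofReal (4 / 3) := by
        rw [← ENNReal.ofReal_pow (exp_pos _).le]
        gcongr
    _ ≤ ENNReal.ofReal (3 / 2) := by
        rw [← ENNReal.ofReal_mul (by norm_num)]
        exact ENNReal.ofReal_le_ofReal (by norm_num)

lemma measure_le_norm_average_sphereHess_sub_integral_le (hμ : 0 < μ) (hμ1 : μ ≤ 1)
    (hμm : μ * √m ≤ 1) (hw : ‖w‖ ≤ 1 / 4) {p : ℕ} {X : Fin (m + 1) → Fin p → Ω → ℝ}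
    (hXm : ∀ i k, Measurable (X i k)) (hX : ∀ i k, HasSubgaussianMGF (X i k) 1 P)
    (hind : iIndepFun (fun ik : Fin (m + 1) × Fin p => X ik.1 ik.2) P) {t : ℝ} (ht : 0 < t) :
    P {ω | t ≤ ‖(p : ℝ)⁻¹ • ∑ k, sphereHess μ w (initVec fun i => X i k ω) (X (Fin.last m) k ω) -
        ∫ ω', (p : ℝ)⁻¹ • ∑ k, sphereHess μ w (initVec fun i => X i k ω')
          (X (Fin.last m) k ω') ∂P‖} ≤
      ENNReal.ofReal (2 * exp (-(p * t ^ 2) /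
        (2 * (16 * (m + 1 : ℕ) / μ) ^ 2 + 2 * (16 * (m + 1 : ℕ) / μ) * t))) := by
  have hcont := continuous_sphereHess_initVec μ w
  have hembed := ((hilbertSchmidt (EuclideanSpace.basisFun (Fin m) ℝ)).continuous.comp
    hcont).measurable
  have hcolm (k : Fin p) : Measurable fun ω i => X i k ω := measurable_pi_lambda _ fun i => hXm i k
  have hcols : iIndepFun (fun k ω i => X i k ω) P :=
    iIndepFun_curry (fun k i => hXm i k) (hind.precomp Prod.swap_injective)
  have hcol (k : Fin p) : iIndepFun (fun i => X i k) P :=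
    hind.precomp (Prod.mk_left_injective k)
  have key := measure_le_norm_average_sub_integral_le
    (fun k => (hcont.stronglyMeasurable.comp_measurable (hcolm k)).aestronglyMeasurable)
    (norm_le_norm_hilbertSchmidt (EuclideanSpace.basisFun (Fin m) ℝ))
    (fun k => hembed.comp (hcolm k)) (hcols.comp _ fun _ => hembed) (R := 16 * (m + 1 : ℕ) / μ)
    (by positivity)
    (fun k => lintegral_exp_norm_hilbertSchmidt_sphereHess_sq_le hμ hμ1 hμm hw (hXm · k) (hX · k)
      (hcol k)) Finset.univ ht
  rwa [Finset.card_univ, Fintype.card_fin] at key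

end Hessian

theorem statement9_general {Ω : Type*} [MeasurableSpace Ω] {P : Measure Ω} {n p : ℕ} {μ t : ℝ}
    {w : EuclideanSpace ℝ (Fin (n - 1))} {X : Fin n → Fin p → Ω → ℝ}
    (hXm : ∀ i k, Measurable (X i k)) (hX : ∀ i k, HasSubgaussianMGF (X i k) 1 P)
    (hind : iIndepFun (fun ik : Fin n × Fin p => X ik.1 ik.2) P) (hμ0 : 0 < μ) (hμ : μ ≤ 1 / √n)
    (hw : ‖w‖ ≤ 1 / 4) (ht : 0 < t) :
    P {ω | t ≤ ‖hessg n p μ (Matrix.of fun i k => X i k ω) w -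
        ∫ ω', hessg n p μ (Matrix.of fun i k => X i k ω') w ∂P‖} ≤
      ENNReal.ofReal (2 * exp (-(p * μ ^ 2 * t ^ 2) / (512 * n ^ 2 + 32 * μ * n * t))) := by
  obtain _ | m := n
  · simp only [CharP.cast_eq_zero, sqrt_zero, div_zero] at hμ
    exact absurd hμ0 hμ.not_gt
  have hμn : μ * √(m + 1 : ℕ) ≤ 1 := (le_div_iff₀ (by positivity)).1 hμ
  have hμm : μ * √m ≤ 1 := le_trans (by gcongr; exact m.le_succ) hμn
  have hμ1 : μ ≤ 1 :=
    (le_mul_of_one_le_right hμ0.le (one_le_sqrt.2 (Nat.one_le_cast.2 m.succ_pos))).trans hμn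
  have hexponent : -(p * μ ^ 2 * t ^ 2) / (512 * (m + 1 : ℕ) ^ 2 + 32 * μ * (m + 1 : ℕ) * t) =
      -(p * t ^ 2) / (2 * (16 * (m + 1 : ℕ) / μ) ^ 2 + 2 * (16 * (m + 1 : ℕ) / μ) * t) := by
    field_simp
    ring
  have hhess (ω : Ω) := hessg_eq hμ0.ne' (Matrix.of fun i k => X i k ω) (hw.trans_lt (by norm_num))
  rw [hexponent]
  simp only [hhess]
  exact measure_le_norm_average_sphereHess_sub_integral_le hμ0 hμ1 hμm hw hXm hX hind ht

/-- Proposition: pointwise concentration of the Hessian in operator norm. -/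
theorem statement9 (n p : ℕ) (θ μ : ℝ) (hθ : θ ∈ Set.Ioo (0 : ℝ) 1) (hμ0 : 0 < μ)
    (hμ : μ ≤ 1 / Real.sqrt n)
    (w : EuclideanSpace ℝ (Fin (n - 1))) (hw : w ∈ GammaSet n) (hw4 : ‖w‖ ≤ 1 / 4)
    (t : ℝ) (ht : 0 < t) :
    bgMatrix θ n p
        {X | t ≤ ‖hessg n p μ (Matrix.of X) w -
                  ∫ X', hessg n p μ (Matrix.of X') w ∂bgMatrix θ n p‖} ≤
      ENNReal.ofReal
        (4 * (n : ℝ) * Real.exp (-((p : ℝ) * μ ^ 2 * t ^ 2) /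
          (512 * (n : ℝ) ^ 2 + 32 * μ * n * t))) := by
  have hθ' := Set.Ioo_subset_Icc_self hθ
  have hn : 0 < n := Nat.pos_of_ne_zero fun h => by
    simp only [h, CharP.cast_eq_zero, sqrt_zero, div_zero] at hμ
    exact hμ0.not_ge hμ
  refine (statement9_general (fun i k => by fun_prop) (hasSubgaussianMGF_bgMatrix hθ')
    (iIndepFun_bgMatrix hθ' n p) hμ0 hμ hw4 ht).trans (ENNReal.ofReal_le_ofReal ?_)
  gcongr
  have : (1 : ℝ) ≤ n := Nat.one_le_cast.2 hn
  linarith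

end
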